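/- arXiv:2006.07228 — 3 statements merged into one kernel-verified Lean document; each statement's English description precedes it below -/
import Mathlib

section
/- Fix an agent i, a synchronization interval of length K ∈ ℕ, and a constant learning rate a > 0 used throughout the interval. Assume: (i) g_i and h are L-Lipschitz (L > 0) in the sense ‖g_i(θ,w) − g_i(θ′,w′)‖ ≤ L(‖θ−θ′‖ + ‖w−w′‖) and likewise for h; (ii) ‖g_i(θ,w) − g(θ,w)‖ ≤ μ_g for all (θ,w) (bounded gradient divergence); (iii) the agent's generator gradient coincides with the pooled generator gradient h. Suppose the local iterates start from the synchronized values (w^i_0, θ^i_0) = (v_0, φ_0) (deterministic), and for 0 ≤ m < K evolve as w^i_{m+1} = w^i_m + a·G_m and θ^i_{m+1} = θ^i_m + a·H_m, where G_m, H_m are integrable random vectors (stochastic gradients) satisfying E‖G_m − g_i(θ^i_m, w^i_m)‖ ≤ σ_g and E‖H_m − h(θ^i_m, w^i_m)‖ ≤ σ_h, while the centralized comparison iterates evolve deterministically from the same initial point as v_{m+1} = v_m + a·g(φ_m, v_m) and φ_{m+1} = φ_m + a·h(φ_m, v_m). Then for every 0 ≤ m ≤ K: E‖w^i_m − v_m‖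 + E‖θ^i_m − φ_m‖ ≤ ((σ_g + μ_g + σ_h)/(2L)) · ((1 + 2aL)^m − 1). -/
open MeasureTheory Finset

lemma fedgan_integrable {E F X Ω : Type*} [NormedAddCommGroup E] [NormedAddCommGroup F]
    [NormedAddCommGroup X] [MeasurableSpace Ω] (P : Measure Ω) [IsProbabilityMeasure P]
    (f : E → F → X) (L : ℝ) (hL : 0 < L)
    (hf : ∀ θ θ' w w', ‖f θ w - f θ' w'‖ ≤ L * (‖θ - θ'‖ + ‖w - w'‖))
    (Θ : Ω → E) (W : Ω → F) (hΘ : Integrable Θ P) (hW : Integrable W P) :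
    Integrable (fun ω => f (Θ ω) (W ω)) P := by
  have hc : Continuous (fun p : E × F => f p.1 p.2) := by
    have : LipschitzWith (Real.toNNReal (2 * L)) (fun p : E × F => f p.1 p.2) := by
      apply LipschitzWith.of_dist_le_mul
      intro p q
      rw [Real.coe_toNNReal _ (by positivity), dist_eq_norm, dist_eq_norm]
      have h1 := norm_fst_le (p - q)
      have h2 := norm_snd_le (p - q)
      have h3 := hf p.1 q.1 p.2 q.2
      simp only [Prod.fst_sub, Prod.snd_sub] at h1 h2
      nlinarith
    exact this.continuous
  have hb : Integrable (fun ω => ‖f 0 0‖ + L * (‖Θ ω‖ + ‖W ω‖)) P :=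
    (integrable_const _).add ((hΘ.norm.add hW.norm).const_mul L)
  refine hb.mono' (hc.comp_aestronglyMeasurable
    (hΘ.aestronglyMeasurable.prodMk hW.aestronglyMeasurable)) (Filter.Eventually.of_forall ?_)
  intro ω
  have h1 := hf (Θ ω) 0 (W ω) 0
  have h2 := norm_sub_norm_le (f (Θ ω) (W ω)) (f 0 0)
  simp only [sub_zero] at h1
  linarith

lemma fedgan_step {X Ω : Type*} [NormedAddCommGroup X] [NormedSpace ℝ X] [MeasurableSpace Ω]
    (P : Measure Ω) [IsProbabilityMeasure P] (W G Q : Ω → X) (v c : X) (a L σ μ : ℝ)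
    (ha : 0 < a) (D : Ω → ℝ) (hD : Integrable D P)
    (hW : Integrable W P) (hG : Integrable G P) (hQ : Integrable Q P)
    (hq : ∀ ω, ‖Q ω - c‖ ≤ L * D ω + μ)
    (hσ : ∫ ω, ‖G ω - Q ω‖ ∂P ≤ σ) :
    ∫ ω, ‖(W ω + a • G ω) - (v + a • c)‖ ∂P ≤
      (∫ ω, ‖W ω - v‖ ∂P) + a * (σ + L * (∫ ω, D ω ∂P) + μ) := by
  have i1 : Integrable (fun ω => ‖W ω - v‖) P := (hW.sub (integrable_const v)).norm
  have i2 : Integrable (fun ω => ‖G ω - Q ω‖) P := (hG.sub hQ).norm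
  have i3 : Integrable (fun ω => L * D ω) P := hD.const_mul L
  have i4 : Integrable (fun _ : Ω => μ) P := integrable_const μ
  have i5 : Integrable (fun ω => ‖G ω - Q ω‖ + L * D ω) P := i2.add i3
  have i6 : Integrable (fun ω => ‖G ω - Q ω‖ + L * D ω + μ) P := i5.add i4
  have i7 : Integrable (fun ω => a * (‖G ω - Q ω‖ + L * D ω + μ)) P := i6.const_mul a
  have i8 : Integrable (fun ω => ‖(W ω + a • G ω) - (v + a • c)‖) P :=
    ((hW.add (hG.smul a)).sub (integrable_const _)).norm
  calc _ ≤ ∫ ω, (‖W ω - v‖ + a * (‖G ω - Q ω‖ + L * D ω + μ)) ∂P := by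
        refine integral_mono i8 (i1.add i7) ?_
        intro ω
        have e : (W ω + a • G ω) - (v + a • c)
            = (W ω - v) + a • ((G ω - Q ω) + (Q ω - c)) := by
          simp only [smul_add, smul_sub]; abel
        have h1 := norm_add_le (W ω - v) (a • ((G ω - Q ω) + (Q ω - c)))
        rw [norm_smul, Real.norm_of_nonneg ha.le] at h1
        have h2 := norm_add_le (G ω - Q ω) (Q ω - c)
        have h3 : ‖(G ω - Q ω) + (Q ω - c)‖ ≤ ‖G ω - Q ω‖ + L * D ω + μ := by
          linarith [hq ω]
        have h4 := mul_le_mul_of_nonneg_left h3 ha.le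
        simp only [e]
        linarith
    _ = (∫ ω, ‖W ω - v‖ ∂P) + a * ((∫ ω, ‖G ω - Q ω‖ ∂P) + L * (∫ ω, D ω ∂P) + μ) := by
        rw [integral_add i1 i7, integral_const_mul, integral_add i5 i4, integral_add i2 i3,
          integral_const_mul]
        simp
    _ ≤ _ := by gcongr

/-- Lemma 1 of the FedGAN paper: within one synchronization interval of length `K`,
the expected deviation of agent `i`'s local stochastic-gradient iterates from the
centralized comparison iterates is bounded by
`(σg + μg + σh)/(2L) * ((1 + 2aL)^m - 1)`. -/
theorem fedgan_lemma1
    {dθ dw : ℕ} {Ω : Type*} [MeasurableSpace Ω]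
    (P : Measure Ω) [IsProbabilityMeasure P]
    (gi g : EuclideanSpace ℝ (Fin dθ) → EuclideanSpace ℝ (Fin dw) → EuclideanSpace ℝ (Fin dw))
    (h : EuclideanSpace ℝ (Fin dθ) → EuclideanSpace ℝ (Fin dw) → EuclideanSpace ℝ (Fin dθ))
    (L a σg σh μg : ℝ) (K : ℕ)
    (hL : 0 < L) (ha : 0 < a)
    (hgiLip : ∀ θ θ' w w', ‖gi θ w - gi θ' w'‖ ≤ L * (‖θ - θ'‖ + ‖w - w'‖))
    (hhLip : ∀ θ θ' w w', ‖h θ w - h θ' w'‖ ≤ L * (‖θ - θ'‖ + ‖w - w'‖))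
    (hdiv : ∀ θ w, ‖gi θ w - g θ w‖ ≤ μg)
    (W : ℕ → Ω → EuclideanSpace ℝ (Fin dw))
    (Θ : ℕ → Ω → EuclideanSpace ℝ (Fin dθ))
    (G : ℕ → Ω → EuclideanSpace ℝ (Fin dw))
    (H : ℕ → Ω → EuclideanSpace ℝ (Fin dθ))
    (v : ℕ → EuclideanSpace ℝ (Fin dw))
    (φ : ℕ → EuclideanSpace ℝ (Fin dθ))
    (hWint : ∀ m, Integrable (W m) P) (hΘint : ∀ m, Integrable (Θ m) P)
    (hGint : ∀ m, Integrable (G m) P) (hHint : ∀ m, Integrable (H m) P)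
    (hW0 : W 0 = fun _ => v 0) (hΘ0 : Θ 0 = fun _ => φ 0)
    (hWrec : ∀ m < K, W (m + 1) = fun ω => W m ω + a • G m ω)
    (hΘrec : ∀ m < K, Θ (m + 1) = fun ω => Θ m ω + a • H m ω)
    (hGerr : ∀ m < K, ∫ ω, ‖G m ω - gi (Θ m ω) (W m ω)‖ ∂P ≤ σg)
    (hHerr : ∀ m < K, ∫ ω, ‖H m ω - h (Θ m ω) (W m ω)‖ ∂P ≤ σh)
    (hvrec : ∀ m < K, v (m + 1) = v m + a • g (φ m) (v m))
    (hφrec : ∀ m < K, φ (m + 1) = φ m + a • h (φ m) (v m)) :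
    ∀ m ≤ K,
      (∫ ω, ‖W m ω - v m‖ ∂P) + (∫ ω, ‖Θ m ω - φ m‖ ∂P) ≤
        (σg + μg + σh) / (2 * L) * ((1 + 2 * a * L) ^ m - 1) := by
  intro m
  induction m with
  | zero => intro _; simp [hW0, hΘ0]
  | succ m ih =>
    intro hm
    have hmK : m < K := hm
    have ih := ih hmK.le
    have iΘ : Integrable (fun ω => ‖Θ m ω - φ m‖) P :=
      ((hΘint m).sub (integrable_const (φ m))).norm
    have iW : Integrable (fun ω => ‖W m ω - v m‖) P :=
      ((hWint m).sub (integrable_const (v m))).norm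
    have s1 := fedgan_step P (W m) (G m) (fun ω => gi (Θ m ω) (W m ω)) (v m) (g (φ m) (v m))
      a L σg μg ha (fun ω => ‖Θ m ω - φ m‖ + ‖W m ω - v m‖) (iΘ.add iW) (hWint m) (hGint m)
      (fedgan_integrable P gi L hL hgiLip _ _ (hΘint m) (hWint m))
      (fun ω => by
        have h1 := norm_sub_le_norm_sub_add_norm_sub
          (gi (Θ m ω) (W m ω)) (gi (φ m) (v m)) (g (φ m) (v m))
        linarith [hgiLip (Θ m ω) (φ m) (W m ω) (v m), hdiv (φ m) (v m)])
      (hGerr m hmK)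
    have s2 := fedgan_step P (Θ m) (H m) (fun ω => h (Θ m ω) (W m ω)) (φ m) (h (φ m) (v m))
      a L σh 0 ha (fun ω => ‖Θ m ω - φ m‖ + ‖W m ω - v m‖) (iΘ.add iW) (hΘint m) (hHint m)
      (fedgan_integrable P h L hL hhLip _ _ (hΘint m) (hWint m))
      (fun ω => by linarith [hhLip (Θ m ω) (φ m) (W m ω) (v m)])
      (hHerr m hmK)
    rw [integral_add iΘ iW] at s1 s2
    rw [hWrec m hmK, hΘrec m hmK, hvrec m hmK, hφrec m hmK]
    have e : (σg + μg + σh) / (2 * L) * ((1 + 2 * a * L) ^ (m + 1) - 1)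
        = (1 + 2 * a * L) * ((σg + μg + σh) / (2 * L) * ((1 + 2 * a * L) ^ m - 1))
          + a * (σg + μg + σh) := by
      field_simp
      ring
    rw [e]
    have h5 := mul_le_mul_of_nonneg_left ih (show 0 ≤ 1 + 2 * a * L by positivity)
    linarith
end

section
/- Suppose sup_n ‖z_n‖ < ∞ and that the residuals satisfy sup_{k ≥ 0} ‖δ_{n,n+k}‖ → 0 as n → ∞, where δ_{n,n+k} := z_{n+k} − z_n − Σ_{j=0}^{k−1} a(n+j)·q(z_{n+j}). Then for every T > 0: lim_{s → ∞} sup_{t ∈ [s, s+T]} ‖z̄(t) − z^s(t)‖ = 0, where z^s is the forward solution of the limiting ODE started from the interpolated trajectory at time s. -/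
open MeasureTheory Finset Filter

/-- The clamped sum agrees with the piecewise linear formula. -/
lemma clamp_sum_eq {E : Type*} [NormedAddCommGroup E] [NormedSpace ℝ E]
    (a : ℕ → ℝ) (ha : ∀ n, 0 < a n) (t : ℕ → ℝ) (hmono : Monotone t)
    (hstep : ∀ n, t (n + 1) = t n + a n) (Q : ℕ → E) (n M : ℕ) (hnM : n + 1 ≤ M)
    (u : ℝ) (h1 : t n ≤ u) (h2 : u ≤ t (n + 1)) :
    ∑ j ∈ Finset.range M, (min (max (u - t j) 0) (a j)) • Q j
      = ∑ j ∈ Finset.range n, a j • Q j + (u - t n) • Q n := by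
  induction M, hnM using Nat.le_induction with
  | base =>
    rw [Finset.sum_range_succ]
    congr 1
    · apply Finset.sum_congr rfl
      intro j hj
      have hj' : j + 1 ≤ n := Finset.mem_range.mp hj
      have := hmono hj'
      have h3 := hstep j
      congr 1
      apply min_eq_right
      apply le_max_of_le_left
      linarith
    · congr 1
      have h3 := hstep n
      rw [max_eq_left (by linarith), min_eq_left (by linarith)]
  | succ M hM ih =>
    rw [Finset.sum_range_succ, ih]
    have := hmono hM
    rw [max_eq_right (by linarith), min_eq_left (ha M).le]
    simp

/-- Forward half of Theorem 1 of the FedGAN paper (pathwise stochastic approximation):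
if the iterates are bounded and the accumulated residuals relative to the Euler scheme
for the `L`-Lipschitz vector field `q` vanish, then the piecewise linear interpolation
`zbar` of the iterates asymptotically tracks, over any horizon `T`, the forward solution
of the limiting ODE started from the interpolated trajectory. -/
theorem fedgan_theorem1_forward {d : ℕ}
    (a : ℕ → ℝ) (ha : ∀ n, 0 < a n)
    (hdiv : ¬ Summable a) (hsq : Summable fun n => (a n) ^ 2)
    (t : ℕ → ℝ) (ht : ∀ n, t n = ∑ m ∈ Finset.range n, a m)
    (z : ℕ → EuclideanSpace ℝ (Fin d))
    (zbar : ℝ → EuclideanSpace ℝ (Fin d))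
    (hzbar : ∀ n, ∀ s ∈ Set.Icc (t n) (t (n + 1)),
      zbar s = z n + ((s - t n) / (t (n + 1) - t n)) • (z (n + 1) - z n))
    (q : EuclideanSpace ℝ (Fin d) → EuclideanSpace ℝ (Fin d))
    (L : ℝ) (hL : 0 ≤ L) (hq : ∀ x y, ‖q x - q y‖ ≤ L * ‖x - y‖)
    (zsol : ℝ → ℝ → EuclideanSpace ℝ (Fin d))
    (hinit : ∀ s, 0 ≤ s → zsol s s = zbar s)
    (hode : ∀ s, 0 ≤ s → ∀ u, s ≤ u →
      HasDerivWithinAt (zsol s) (q (zsol s u)) (Set.Ici s) u)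
    (hbd : ∃ C, ∀ n, ‖z n‖ ≤ C)
    (hres : ∀ ε > 0, ∃ N, ∀ n ≥ N, ∀ k,
      ‖z (n + k) - z n - ∑ j ∈ Finset.range k, a (n + j) • q (z (n + j))‖ ≤ ε) :
    ∀ T > 0, ∀ ε > 0, ∃ S : ℝ, 0 ≤ S ∧ ∀ s ≥ S,
      ∀ u ∈ Set.Icc s (s + T), ‖zbar u - zsol s u‖ ≤ ε := by
  intro T hT ε hε
  obtain ⟨C, hC⟩ := hbd
  have hstep : ∀ n, t (n + 1) = t n + a n := by
    intro n
    rw [ht, ht, Finset.sum_range_succ]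
  have hmono : Monotone t := monotone_nat_of_le_succ (fun n => by
    rw [hstep]; linarith [ha n])
  have htop : Tendsto t atTop atTop := by
    have h := (not_summable_iff_tendsto_nat_atTop_of_nonneg (fun n => (ha n).le)).1 hdiv
    rwa [show t = fun n => ∑ m ∈ Finset.range n, a m from funext ht]
  have ht0 : t 0 = 0 := by rw [ht]; simp
  -- index function
  have hidx : ∀ u : ℝ, ∃ n, 0 ≤ u → t n ≤ u ∧ u < t (n + 1) := by
    intro u
    by_cases hu : 0 ≤ u
    · have hex : ∃ n, u < t n := (htop.eventually_gt_atTop u).exists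
      classical
      have hf := Nat.find_spec hex
      have hpos : Nat.find hex ≠ 0 := by
        intro h0
        rw [h0, ht0] at hf
        linarith
      obtain ⟨m, hm⟩ := Nat.exists_eq_succ_of_ne_zero hpos
      refine ⟨m, fun _ => ⟨?_, ?_⟩⟩
      · have := Nat.find_min hex (m := m) (by omega)
        linarith
      · rw [hm] at hf
        exact hf
    · exact ⟨0, fun h => absurd h hu⟩
  choose ν hν using hidx
  -- bound on the field along the iterates
  obtain ⟨B, hB0, hB⟩ : ∃ B, 0 < B ∧ ∀ n, ‖q (z n)‖ ≤ B := by
    refine ⟨L * C + ‖q 0‖ + 1, ?_, fun n => ?_⟩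
    · have := norm_nonneg (z 0)
      have := hC 0
      have : 0 ≤ C := by linarith
      positivity
    · have h1 := hq (z n) 0
      rw [sub_zero] at h1
      have h2 := norm_le_norm_add_norm_sub' (q (z n)) (q 0)
      have h3 := mul_le_mul_of_nonneg_left (hC n) hL
      linarith
  -- choice of the tolerance
  obtain ⟨η, hη, hηε⟩ : ∃ η > 0, 2 * η + gronwallBound 0 L (5 * L * η) T ≤ ε := by
    have hc : Continuous fun η : ℝ => 2 * η + gronwallBound 0 L (5 * L * η) T :=
      (continuous_const.mul continuous_id).add
        ((gronwallBound_continuous_ε 0 L T).comp (continuous_const.mul continuous_id))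
    have h0 := hc.tendsto 0
    simp only [mul_zero, gronwallBound_ε0_δ0, add_zero] at h0
    have h1 := (h0.eventually (gt_mem_nhds hε)).filter_mono
      (nhdsWithin_le_nhds (s := Set.Ioi (0 : ℝ)))
    obtain ⟨η, h2, h3⟩ := (h1.and self_mem_nhdsWithin).exists
    exact ⟨η, h3, h2.le⟩
  obtain ⟨N₁, hN₁⟩ := hres η hη
  have ha0 : Tendsto a atTop (nhds 0) := by
    have h1 := hsq.tendsto_atTop_zero
    have h2 := h1.sqrt
    simpa [Real.sqrt_sq (ha _).le] using h2
  obtain ⟨N₂, hN₂⟩ : ∃ N₂, ∀ n ≥ N₂, a n ≤ η / B := by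
    have := ha0.eventually (gt_mem_nhds (show (0 : ℝ) < η / B by positivity))
    obtain ⟨N₂, h⟩ := eventually_atTop.1 this
    exact ⟨N₂, fun n hn => (h n hn).le⟩
  obtain ⟨N, hNN₁, hNN₂⟩ : ∃ N, N₁ ≤ N ∧ N₂ ≤ N := ⟨max N₁ N₂, le_max_left _ _, le_max_right _ _⟩
  set p : ℕ → EuclideanSpace ℝ (Fin d) :=
    fun n => z n - ∑ j ∈ Finset.range n, a j • q (z j) with hp
  have hpN : ∀ n ≥ N, ‖p n - p N‖ ≤ η := by
    intro n hn
    obtain ⟨k, rfl⟩ := Nat.exists_eq_add_of_le hn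
    have h := hN₁ N hNN₁ k
    convert h using 2
    simp only [hp]
    rw [Finset.sum_range_add]
    abel
  have hdz : ∀ n ≥ N, ‖z (n + 1) - z n‖ ≤ 3 * η := by
    intro n hn
    have e : z (n + 1) - z n = (p (n + 1) - p N) - (p n - p N) + a n • q (z n) := by
      simp only [hp]
      rw [Finset.sum_range_succ]
      abel
    have h1 := hpN n hn
    have h2 := hpN (n + 1) (by omega)
    have h3 : ‖a n • q (z n)‖ ≤ η := by
      rw [norm_smul, Real.norm_of_nonneg (ha n).le]
      calc a n * ‖q (z n)‖ ≤ (η / B) * B :=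
            mul_le_mul (hN₂ n (by omega)) (hB n) (norm_nonneg _) (by positivity)
        _ = η := by field_simp
    rw [e]
    have h4 := norm_add_le ((p (n + 1) - p N) - (p n - p N)) (a n • q (z n))
    have h5 := norm_sub_le (p (n + 1) - p N) (p n - p N)
    linarith
  have htN : 0 ≤ t N := by rw [← ht0]; exact hmono (Nat.zero_le N)
  refine ⟨t N, htN, ?_⟩
  intro s hs u hu
  have hs0 : 0 ≤ s := le_trans htN hs
  obtain ⟨M, hM⟩ : ∃ M, s + T < t M := (htop.eventually_gt_atTop (s + T)).exists
  set W : ℝ → EuclideanSpace ℝ (Fin d) := fun x =>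
    ∑ j ∈ Finset.range M, (min (max (x - t j) 0) (a j)) • q (z j) with hW
  have hWc : Continuous W := by
    rw [hW]
    fun_prop
  have hWeq : ∀ n, n + 1 ≤ M → ∀ x, t n ≤ x → x ≤ t (n + 1) →
      W x = ∑ j ∈ Finset.range n, a j • q (z j) + (x - t n) • q (z n) := by
    intro n hn x h1 h2
    exact clamp_sum_eq a ha t hmono hstep (fun j => q (z j)) n M hn x h1 h2
  have hidx2 : ∀ x, s ≤ x → x ≤ s + T →
      t (ν x) ≤ x ∧ x < t (ν x + 1) ∧ N ≤ ν x ∧ ν x + 1 ≤ M := by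
    intro x h1 h2
    obtain ⟨h3, h4⟩ := hν x (hs0.trans h1)
    refine ⟨h3, h4, ?_, ?_⟩
    · by_contra hcon
      have := hmono (show ν x + 1 ≤ N by omega)
      linarith
    · by_contra hcon
      have := hmono (show M ≤ ν x by omega)
      linarith
  have hE : ∀ x, s ≤ x → x ≤ s + T →
      ‖zbar x - W x - p N‖ ≤ η ∧ ‖z (ν x) - zbar x‖ ≤ 3 * η := by
    intro x hx1 hx2
    obtain ⟨h1, h2, h3, h4⟩ := hidx2 x hx1 hx2
    have hz := hzbar (ν x) x ⟨h1, h2.le⟩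
    have hw := hWeq (ν x) h4 x h1 h2.le
    have han := ha (ν x)
    have hst := hstep (ν x)
    have hp1 := hpN (ν x) h3
    have hp2 := hpN (ν x + 1) (by omega)
    have hd := hdz (ν x) h3
    generalize ν x = n at *
    rw [hst, add_sub_cancel_left] at hz
    obtain ⟨l, hl⟩ : ∃ l, l = (x - t n) / a n := ⟨_, rfl⟩
    have hl0 : 0 ≤ l := by rw [hl]; exact div_nonneg (by linarith) han.le
    have hl1 : l ≤ 1 := by rw [hl, div_le_one han]; linarith
    have hla : x - t n = l * a n := by rw [hl]; field_simp
    rw [← hl] at hz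
    rw [hla] at hw
    constructor
    · have e : zbar x - W x - p N = (1 - l) • (p n - p N) + l • (p (n + 1) - p N) := by
        rw [hz, hw]
        have e1 : p n = z n - ∑ j ∈ Finset.range n, a j • q (z j) := rfl
        have e2 : p (n + 1) =
            z (n + 1) - (∑ j ∈ Finset.range n, a j • q (z j) + a n • q (z n)) := by
          rw [← Finset.sum_range_succ]
        rw [e1, e2]
        module
      rw [e]
      refine (norm_add_le _ _).trans ?_
      rw [norm_smul, norm_smul, Real.norm_of_nonneg hl0,
        Real.norm_of_nonneg (sub_nonneg.2 hl1)]
      have := mul_le_mul_of_nonneg_left hp1 (sub_nonneg.2 hl1)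
      have := mul_le_mul_of_nonneg_left hp2 hl0
      linarith
    · have e : z n - zbar x = -(l • (z (n + 1) - z n)) := by rw [hz]; abel
      rw [e, norm_neg, norm_smul, Real.norm_of_nonneg hl0]
      have := mul_le_mul_of_nonneg_right hl1 (norm_nonneg (z (n + 1) - z n))
      linarith
  set w : ℝ → EuclideanSpace ℝ (Fin d) := fun x => zbar s + (W x - W s) with hw
  have hEs := (hE s le_rfl (by linarith)).1
  have hzw : ∀ x, s ≤ x → x ≤ s + T → ‖zbar x - w x‖ ≤ 2 * η := by
    intro x h1 h2
    have h3 := (hE x h1 h2).1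
    have e : zbar x - w x = (zbar x - W x - p N) - (zbar s - W s - p N) := by
      simp only [hw]; abel
    rw [e]
    have := norm_sub_le (zbar x - W x - p N) (zbar s - W s - p N)
    linarith
  have key := norm_le_gronwallBound_of_norm_deriv_right_le
    (f := fun x => w x - zsol s x) (f' := fun x => q (z (ν x)) - q (zsol s x))
    (δ := 0) (K := L) (ε := 5 * L * η) (a := s) (b := s + T) ?_ ?_ ?_ ?_ u hu
  · have hm := gronwallBound_mono (δ := 0) (K := L) (ε := 5 * L * η) le_rfl (by positivity) hL
      (show u - s ≤ T by linarith [hu.2])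
    have h1 := hzw u hu.1 hu.2
    have h2 := norm_sub_le_norm_sub_add_norm_sub (zbar u) (w u) (zsol s u)
    linarith
  · apply ContinuousOn.sub
    · exact (continuous_const.add (hWc.sub continuous_const)).continuousOn
    · intro x hx
      exact ((hode s hs0 x hx.1).continuousWithinAt).mono Set.Icc_subset_Ici_self
  · intro x hx
    obtain ⟨h1, h2, h3, h4⟩ := hidx2 x hx.1 hx.2.le
    apply HasDerivWithinAt.sub
    · have haff : HasDerivWithinAt (fun y => zbar s + ((∑ j ∈ Finset.range (ν x), a j • q (z j)
          + (y - t (ν x)) • q (z (ν x))) - W s)) (q (z (ν x))) (Set.Ici x) x := by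
        have h5 : HasDerivAt (fun y : ℝ => (y - t (ν x)) • q (z (ν x)))
            ((1 : ℝ) • q (z (ν x))) x :=
          ((hasDerivAt_id x).sub_const _).smul_const _
        rw [one_smul] at h5
        exact (((h5.const_add _).sub_const _).const_add _).hasDerivWithinAt
      refine haff.congr_of_eventuallyEq ?_ ?_
      · have h6 : ∀ᶠ y in nhdsWithin x (Set.Ici x), y < t (ν x + 1) :=
          nhdsWithin_le_nhds (gt_mem_nhds h2)
        filter_upwards [h6, self_mem_nhdsWithin] with y hy hy2
        simp only [hw]
        rw [hWeq (ν x) h4 y (h1.trans hy2) hy.le]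
      · simp only [hw]
        rw [hWeq (ν x) h4 x h1 h2.le]
    · exact (hode s hs0 x hx.1).mono (Set.Ici_subset_Ici.2 hx.1)
  · simp [hw, hinit s hs0]
  · intro x hx
    have h1 := (hE x hx.1 hx.2.le).2
    have h2 := hzw x hx.1 hx.2.le
    have h3 := hq (z (ν x)) (zsol s x)
    have h4 := norm_sub_le_norm_sub_add_norm_sub (z (ν x)) (zbar x) (zsol s x)
    have h5 := norm_sub_le_norm_sub_add_norm_sub (zbar x) (w x) (zsol s x)
    have h6 : ‖z (ν x) - zsol s x‖ ≤ 5 * η + ‖w x - zsol s x‖ := by linarith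
    have h7 := mul_le_mul_of_nonneg_left h6 hL
    linarith
end

section
/- Suppose sup_n ‖z_n‖ < ∞ and that the residuals satisfy sup_{k ≥ 0} ‖δ_{n,n+k}‖ → 0 as n → ∞, where δ_{n,n+k} := z_{n+k} − z_n − Σ_{j=0}^{k−1} a(n+j)·q(z_{n+j}). Then for every T > 0: lim_{s → ∞} sup_{t ∈ [max(0, s−T), s]} ‖z̄(t) − z_s(t)‖ = 0, where z_s is the backward solution of the limiting ODE ending at the interpolated trajectory at time s. -/
open MeasureTheory Finset Filter

theorem fedgan_aux_ybar {E : Type*} [NormedAddCommGroup E] [NormedSpace ℝ E]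
    (a : ℕ → ℝ) (ha : ∀ n, 0 < a n) (t : ℕ → ℝ) (hts : ∀ n, t (n + 1) = t n + a n)
    (htm : Monotone t) (p : ℕ → E) (N n : ℕ) (hn : n < N) (u : ℝ)
    (hu : u ∈ Set.Icc (t n) (t (n + 1))) :
    ∑ m ∈ Finset.range N, (min (max (u - t m) 0) (a m)) • p m
      = ∑ m ∈ Finset.range n, a m • p m + (u - t n) • p n := by
  have h1 : ∑ m ∈ Finset.range N, (min (max (u - t m) 0) (a m)) • p m
      = ∑ m ∈ Finset.range (n + 1), (min (max (u - t m) 0) (a m)) • p m := by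
    symm
    apply Finset.sum_subset
    · intro m hm
      simp only [Finset.mem_range] at hm ⊢
      omega
    · intro m _ hm
      simp only [Finset.mem_range, not_lt] at hm
      have h2 := htm hm
      have h3 : u - t m ≤ 0 := by linarith [hu.2]
      rw [max_eq_right h3, min_eq_left (ha m).le, zero_smul]
  rw [h1, Finset.sum_range_succ]
  congr 1
  · apply Finset.sum_congr rfl
    intro m hm
    have hm' : m + 1 ≤ n := by simpa using hm
    have h2 := htm hm'
    rw [hts m] at h2
    have h3 : a m ≤ max (u - t m) 0 := le_max_of_le_left (by linarith [hu.1])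
    rw [min_eq_right h3]
  · have h4 := hts n
    rw [max_eq_left (by linarith [hu.1]), min_eq_left (by linarith [hu.2])]

/-- Backward half of Theorem 1 of the FedGAN paper (pathwise stochastic approximation):
if the iterates are bounded and the accumulated residuals relative to the Euler scheme
for the `L`-Lipschitz vector field `q` vanish, then the piecewise linear interpolation
`zbar` of the iterates asymptotically tracks, over any horizon `T`, the backward solution
of the limiting ODE ending at the interpolated trajectory. -/
theorem fedgan_theorem1_backward {d : ℕ}
    (a : ℕ → ℝ) (ha : ∀ n, 0 < a n)
    (hdiv : ¬ Summable a) (hsq : Summable fun n => (a n) ^ 2)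
    (t : ℕ → ℝ) (ht : ∀ n, t n = ∑ m ∈ Finset.range n, a m)
    (z : ℕ → EuclideanSpace ℝ (Fin d))
    (zbar : ℝ → EuclideanSpace ℝ (Fin d))
    (hzbar : ∀ n, ∀ s ∈ Set.Icc (t n) (t (n + 1)),
      zbar s = z n + ((s - t n) / (t (n + 1) - t n)) • (z (n + 1) - z n))
    (q : EuclideanSpace ℝ (Fin d) → EuclideanSpace ℝ (Fin d))
    (L : ℝ) (hL : 0 ≤ L) (hq : ∀ x y, ‖q x - q y‖ ≤ L * ‖x - y‖)
    (zsol : ℝ → ℝ → EuclideanSpace ℝ (Fin d))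
    (hfinal : ∀ s, 0 ≤ s → zsol s s = zbar s)
    (hode : ∀ s, 0 ≤ s → ∀ u, u ≤ s →
      HasDerivWithinAt (zsol s) (q (zsol s u)) (Set.Iic s) u)
    (hbd : ∃ C, ∀ n, ‖z n‖ ≤ C)
    (hres : ∀ ε > 0, ∃ N, ∀ n ≥ N, ∀ k,
      ‖z (n + k) - z n - ∑ j ∈ Finset.range k, a (n + j) • q (z (n + j))‖ ≤ ε) :
    ∀ T > 0, ∀ ε > 0, ∃ S : ℝ, 0 ≤ S ∧ ∀ s ≥ S,
      ∀ u ∈ Set.Icc (max 0 (s - T)) s, ‖zbar u - zsol s u‖ ≤ ε := by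
  obtain ⟨C, hC⟩ := hbd
  intro T hT ε hε
  have hts : ∀ n, t (n + 1) = t n + a n := by
    intro n
    rw [ht, ht, Finset.sum_range_succ]
  have htm : StrictMono t := strictMono_nat_of_lt_succ (fun n => by
    rw [hts n]; linarith [ha n])
  have ht0 : t 0 = 0 := by rw [ht]; simp
  have htop : Tendsto t atTop atTop := by
    have h := (not_summable_iff_tendsto_nat_atTop_of_nonneg (fun n => (ha n).le)).1 hdiv
    exact h.congr (fun n => (ht n).symm)
  have ha0 : Tendsto a atTop (nhds 0) := by
    have h := (hsq.tendsto_atTop_zero).sqrt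
    simp only [Real.sqrt_zero] at h
    exact h.congr (fun n => Real.sqrt_sq (ha n).le)
  have hfind : ∀ u, 0 < u → ∃ n, t n < u ∧ u ≤ t (n + 1) := by
    intro u hu
    have hex : ∃ n, u ≤ t n := (htop.eventually_ge_atTop u).exists
    classical
    have hsp := Nat.find_spec hex
    have hmin := fun m => @Nat.find_min _ _ hex m
    rcases hk : Nat.find hex with _ | k
    · rw [hk, ht0] at hsp; linarith
    · rw [hk] at hsp
      exact ⟨k, lt_of_not_ge (hmin k (by omega)), hsp⟩
  -- constants
  set K : ℝ := L + 1 with hK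
  have hKpos : 0 < K := by linarith
  set η : ℝ := ε / (4 * Real.exp (K * T)) with hη
  have hηpos : 0 < η := by positivity
  set M : ℝ := ‖q 0‖ + L * C with hM
  have hqM : ∀ n, ‖q (z n)‖ ≤ M := by
    intro n
    have h1 := hq (z n) 0
    have h2 := norm_sub_norm_le (q (z n)) (q 0)
    rw [sub_zero] at h1
    have h3 := mul_le_mul_of_nonneg_left (hC n) hL
    linarith
  have hM0 : 0 ≤ M := (norm_nonneg _).trans (hqM 0)
  obtain ⟨N1, hN1⟩ := hres η hηpos
  have haM : Tendsto (fun n => a n * M) atTop (nhds 0) := by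
    simpa using ha0.mul_const M
  obtain ⟨N2, hN2⟩ := eventually_atTop.1 (haM.eventually (gt_mem_nhds hηpos))
  set N0 := max N1 N2 with hN0
  -- D
  set Y : ℕ → EuclideanSpace ℝ (Fin d) := fun n => ∑ m ∈ Finset.range n, a m • q (z m) with hY
  set D : ℕ → EuclideanSpace ℝ (Fin d) := fun n => z n - Y n with hD
  have hDη : ∀ n ≥ N0, ‖D n - D N0‖ ≤ η := by
    intro n hn
    obtain ⟨k, rfl⟩ := Nat.exists_eq_add_of_le hn
    have h1 := hN1 N0 (le_max_left _ _) k
    have h2 : Y (N0 + k) = Y N0 + ∑ j ∈ Finset.range k, a (N0 + j) • q (z (N0 + j)) :=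
      Finset.sum_range_add _ _ _
    have h3 : D (N0 + k) - D N0
        = z (N0 + k) - z N0 - ∑ j ∈ Finset.range k, a (N0 + j) • q (z (N0 + j)) := by
      simp only [hD, h2]
      abel
    rw [h3]; exact h1
  have hstep : ∀ n ≥ N0, ‖z (n + 1) - z n‖ ≤ 2 * η := by
    intro n hn
    have h1 := hN1 n (le_trans (le_max_left _ _) hn) 1
    simp only [Finset.sum_range_one, Nat.add_zero] at h1
    have h2 := hN2 n (le_trans (le_max_right _ _) hn)
    have h3 : ‖a n • q (z n)‖ ≤ a n * M := by
      rw [norm_smul, Real.norm_of_nonneg (ha n).le]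
      exact mul_le_mul_of_nonneg_left (hqM n) (ha n).le
    have h4 := norm_sub_norm_le (z (n + 1) - z n) (a n • q (z n))
    linarith
  refine ⟨t (N0 + 1) + T, ?_, ?_⟩
  · have := htm.monotone (Nat.zero_le (N0 + 1))
    linarith
  intro s hs u hu
  have hu0 : t (N0 + 1) ≤ u := by
    have := (le_max_right _ _).trans hu.1
    linarith
  have huT : s - T ≤ u := (le_max_right _ _).trans hu.1
  have hpos1 : 0 < t (N0 + 1) := by
    rw [← ht0]; exact htm (Nat.succ_pos _)
  have hs0 : 0 ≤ s := by linarith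
  obtain ⟨N, hN⟩ := (htop.eventually_gt_atTop s).exists
  set Yb : ℝ → EuclideanSpace ℝ (Fin d) := fun v =>
    ∑ m ∈ Finset.range N, (min (max (v - t m) 0) (a m)) • q (z m) with hYb
  have hYbc : Continuous Yb := by
    simp only [hYb]; fun_prop
  have hYbe : ∀ n, n < N → ∀ v ∈ Set.Icc (t n) (t (n + 1)),
      Yb v = Y n + (v - t n) • q (z n) := fun n hn v hv =>
    fedgan_aux_ybar a ha t hts htm.monotone (fun m => q (z m)) N n hn v hv
  have hloc : ∀ v, t (N0 + 1) ≤ v → v ≤ s → ∃ n, N0 ≤ n ∧ n < N ∧ t n < v ∧ v ≤ t (n + 1) := by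
    intro v hv hvs
    obtain ⟨n, h1, h2⟩ := hfind v (by linarith)
    refine ⟨n, ?_, htm.lt_iff_lt.1 (by linarith), h1, h2⟩
    have := htm.le_iff_le.1 (hv.trans h2)
    omega
  have hDb : ∀ v, t (N0 + 1) ≤ v → v ≤ s → ‖zbar v - Yb v - D N0‖ ≤ η := by
    intro v hv hvs
    obtain ⟨n, hn0, hnN, h1, h2⟩ := hloc v hv hvs
    rw [hzbar n v ⟨h1.le, h2⟩, hYbe n hnN v ⟨h1.le, h2⟩]
    have han := ha n
    have e1 : t (n + 1) - t n = a n := by rw [hts n]; ring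
    rw [e1]
    set l := (v - t n) / a n with hl
    have hl0 : 0 ≤ l := div_nonneg (by linarith) han.le
    have hl1 : l ≤ 1 := by
      rw [hl, div_le_one han]; linarith
    have hv' : v - t n = l * a n := by rw [hl]; field_simp
    have hY1 : Y (n + 1) = Y n + a n • q (z n) := Finset.sum_range_succ _ _
    have e2 : z n + l • (z (n + 1) - z n) - (Y n + (v - t n) • q (z n)) - D N0
        = (1 - l) • (D n - D N0) + l • (D (n + 1) - D N0) := by
      simp only [hD, hY1, hv']
      module
    rw [e2]
    calc _ ≤ ‖(1 - l) • (D n - D N0)‖ + ‖l • (D (n + 1) - D N0)‖ := norm_add_le _ _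
      _ = (1 - l) * ‖D n - D N0‖ + l * ‖D (n + 1) - D N0‖ := by
        rw [norm_smul, norm_smul, Real.norm_of_nonneg hl0, Real.norm_of_nonneg (by linarith)]
      _ ≤ (1 - l) * η + l * η := by
        have := hDη n hn0
        have := hDη (n + 1) (by omega)
        have : 0 ≤ 1 - l := by linarith
        gcongr
      _ = η := by ring
  set c := zbar s - Yb s with hc
  have hsS : t (N0 + 1) ≤ s := by linarith
  have hyz : ∀ v, t (N0 + 1) ≤ v → v ≤ s → ‖zbar v - (Yb v + c)‖ ≤ 2 * η := by
    intro v hv hvs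
    have h1 := hDb v hv hvs
    have h2 := hDb s hsS le_rfl
    have e : zbar v - (Yb v + c) = (zbar v - Yb v - D N0) - (zbar s - Yb s - D N0) := by
      rw [hc]; abel
    rw [e]
    exact (norm_sub_le _ _).trans (by linarith)
  -- index function
  have hloc' : ∀ τ : ℝ, ∃ n, τ ∈ Set.Ico 0 (s - u) →
      N0 ≤ n ∧ n < N ∧ t n < s - τ ∧ s - τ ≤ t (n + 1) := by
    intro τ
    by_cases h : τ ∈ Set.Ico 0 (s - u)
    · obtain ⟨n, hn⟩ := hloc (s - τ) (by linarith [h.2]) (by linarith [h.1])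
      exact ⟨n, fun _ => hn⟩
    · exact ⟨0, fun h' => absurd h' h⟩
  choose ν hν using hloc'
  have hLip : LipschitzWith ⟨K, hKpos.le⟩ (fun x => - q x) := by
    apply LipschitzWith.of_dist_le_mul
    intro x y
    rw [dist_neg_neg, dist_eq_norm, dist_eq_norm]
    refine (hq x y).trans ?_
    exact mul_le_mul_of_nonneg_right (by show L ≤ K; linarith) (norm_nonneg _)
  have hrev : ∀ τ : ℝ, HasDerivWithinAt (fun τ : ℝ => s - τ) (-1) (Set.Ici τ) τ := by
    intro τ
    simpa using ((hasDerivAt_id τ).const_sub s).hasDerivWithinAt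
  have hf' : ∀ τ ∈ Set.Ico 0 (s - u), HasDerivWithinAt (fun τ => Yb (s - τ) + c)
      (- q (z (ν τ))) (Set.Ici τ) τ := by
    intro τ hτ
    obtain ⟨h1, h2, h3, h4⟩ := hν τ hτ
    set n := ν τ
    have hd : HasDerivWithinAt (fun τ => Y n + (s - τ - t n) • q (z n) + c)
        (- q (z n)) (Set.Ici τ) τ := by
      have := ((((hrev τ).sub_const (t n)).smul_const (q (z n))).const_add (Y n)).add_const c
      simpa using this
    refine hd.congr_of_eventuallyEq ?_ ?_
    · have hmem : Set.Iio (s - t n) ∈ nhdsWithin τ (Set.Ici τ) :=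
        mem_nhdsWithin_of_mem_nhds (Iio_mem_nhds (by linarith))
      filter_upwards [hmem, self_mem_nhdsWithin] with x hx hx'
      simp only [Set.mem_Iio, Set.mem_Ici] at hx hx'
      rw [hYbe n h2 (s - x) ⟨by linarith, by linarith⟩]
    · show Yb (s - τ) + c = Y n + (s - τ - t n) • q (z n) + c
      rw [hYbe n h2 (s - τ) ⟨by linarith, by linarith⟩]
  have hg' : ∀ τ ∈ Set.Ico 0 (s - u), HasDerivWithinAt (fun τ => zsol s (s - τ))
      (- q (zsol s (s - τ))) (Set.Ici τ) τ := by
    intro τ hτ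
    have hmaps : Set.MapsTo (fun τ : ℝ => s - τ) (Set.Ici τ) (Set.Iic s) := by
      intro x hx
      have h5 : τ ≤ x := hx
      show s - x ≤ s
      linarith [hτ.1]
    have := HasDerivWithinAt.scomp τ (hode s hs0 (s - τ) (by linarith [hτ.1])) (hrev τ) hmaps
    simpa [Function.comp_def] using this
  have hgc : ContinuousOn (fun τ => zsol s (s - τ)) (Set.Icc 0 (s - u)) := by
    have h1 : ContinuousOn (zsol s) (Set.Iic s) := fun x hx =>
      (hode s hs0 x hx).continuousWithinAt
    refine h1.comp (by fun_prop) ?_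
    intro x hx
    show s - x ≤ s
    linarith [hx.1]
  have key := dist_le_of_approx_trajectories_ODE (v := fun _ x => - q x)
    (K := ⟨K, hKpos.le⟩) (f := fun τ => Yb (s - τ) + c) (g := fun τ => zsol s (s - τ))
    (f' := fun τ => - q (z (ν τ))) (g' := fun τ => - q (zsol s (s - τ)))
    (a := 0) (b := s - u) (εf := 4 * η * K) (εg := 0) (δ := 0)
    (fun _ => hLip) (by fun_prop) hf' ?_ hgc hg' ?_ ?_ (s - u)
    ⟨by linarith [hu.2], le_rfl⟩
  · simp only [sub_sub_cancel, sub_zero, add_zero] at key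
    rw [gronwallBound_of_K_ne_0 (by exact hKpos.ne')] at key
    have hk : dist (Yb u + c) (zsol s u) ≤ 4 * η * (Real.exp (K * (s - u)) - 1) := by
      refine key.trans (le_of_eq ?_)
      show 0 * Real.exp (K * (s - u)) + 4 * η * K / K * (Real.exp (K * (s - u)) - 1) = _
      field_simp
      ring
    rw [dist_eq_norm] at hk
    have h1 := hyz u hu0 hu.2
    have h2 : Real.exp (K * (s - u)) ≤ Real.exp (K * T) := by
      apply Real.exp_le_exp.2
      apply mul_le_mul_of_nonneg_left _ hKpos.le
      linarith
    have h3 : 4 * η * Real.exp (K * T) = ε := by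
      rw [hη]; field_simp
    have h4 := mul_le_mul_of_nonneg_left h2 (by positivity : 0 ≤ 4 * η)
    have h5 := norm_sub_le_norm_sub_add_norm_sub (zbar u) (Yb u + c) (zsol s u)
    linarith
  · intro τ hτ
    obtain ⟨h1, h2, h3, h4⟩ := hν τ hτ
    set n := ν τ
    rw [dist_neg_neg, dist_eq_norm]
    refine (hq _ _).trans ?_
    have hv1 : t (N0 + 1) ≤ s - τ := by linarith [hτ.2]
    have hv2 : s - τ ≤ s := by linarith [hτ.1]
    have h5 := hyz (s - τ) hv1 hv2
    have h6 : ‖z n - zbar (s - τ)‖ ≤ 2 * η := by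
      rw [hzbar n (s - τ) ⟨h3.le, h4⟩, sub_add_cancel_left, norm_neg, norm_smul]
      have han : 0 < t (n + 1) - t n := by linarith
      rw [Real.norm_of_nonneg (div_nonneg (by linarith) han.le)]
      refine le_trans ?_ (hstep n h1)
      apply mul_le_of_le_one_left (norm_nonneg _)
      rw [div_le_one han]; linarith
    have h7 := norm_sub_le_norm_sub_add_norm_sub (z n) (zbar (s - τ)) (Yb (s - τ) + c)
    have h8 : ‖z n - (Yb (s - τ) + c)‖ ≤ 4 * η := by linarith
    calc L * ‖z n - (Yb (s - τ) + c)‖ ≤ K * (4 * η) :=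
          mul_le_mul (by linarith) h8 (norm_nonneg _) hKpos.le
      _ = 4 * η * K := by ring
  · intro τ _
    simp
  · simp only [sub_zero]
    rw [hfinal s hs0, hc]
    simp
end
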